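/- arXiv:math/0002135 — 2 statements merged into one kernel-verified Lean document; each statement's English description precedes it below -/
import Mathlib

section
/- For every n ∈ ℕ and all z, z' ∈ ℂ, one has the identity Σ_{λ ⊢ n} n! · Π_{□∈λ} (z + c(□))(z' + c(□)) / h(□)² = (zz')_n, where the sum runs over all partitions λ of n. (Equivalently, the z-measure M_n(λ) = (n!/(zz')_n) Π_{□∈λ}(z+c(□))(z'+c(□))/h(□)² satisfies Σ_{|λ|=n} M_n(λ) = 1 whenever (zz')_n ≠ 0.) -/
open scoped Classical

noncomputable section

/-- The content of a cell `c = (i, j)` (0-indexed row `i` and column `j`) of a Young diagram: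
`c(□) = column(□) - row(□)`. -/
def cellContent (c : ℕ × ℕ) : ℤ := (c.2 : ℤ) - (c.1 : ℤ)

/-- The hook length of the cell `c = (i, j)` of the Young diagram `Y`:
`h(□) = λ_i - j + λ'_j - i - 1` in 0-indexed coordinates. -/
def hookLen (Y : YoungDiagram) (c : ℕ × ℕ) : ℕ :=
  (Y.rowLen c.1 - c.2) + (Y.colLen c.2 - c.1) - 1

/-- The product `Π_{□ ∈ λ} (z + c(□)) (z' + c(□)) / h(□)²`. -/
def zWeight (z z' : ℂ) (Y : YoungDiagram) : ℂ :=
  ∏ c ∈ Y.cells, ((z + cellContent c) * (z' + cellContent c) / (hookLen Y c : ℂ) ^ 2)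

/-- The finset of squares addable to the Young diagram `Y`: cells `c ∉ Y` such that
adding `c` to `Y` again yields a Young diagram, i.e. every strictly smaller cell
(in the product order) already belongs to `Y`.  Any such cell has the form
`(i, Y.rowLen i)` for some `i ≤ Y.colLen 0`. -/
def addables (Y : YoungDiagram) : Finset (ℕ × ℕ) :=
  ((Finset.range (Y.colLen 0 + 1)).image fun i => (i, Y.rowLen i)).filter
    fun c => ∀ d : ℕ × ℕ, d ≤ c → d ≠ c → d ∈ Y.cells

/-- Add a square to a Young diagram (when the result is again a Young diagram;
junk value `Y` otherwise). -/
def addBox (Y : YoungDiagram) (c : ℕ × ℕ) : YoungDiagram :=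
  if h : c ∉ Y.cells ∧ ∀ d : ℕ × ℕ, d ≤ c → d ≠ c → d ∈ Y.cells then
    { cells := insert c Y.cells,
      isLowerSet := by
        intro a b hba ha
        simp only [Finset.coe_insert, Set.mem_insert_iff, Finset.mem_coe] at ha ⊢
        rcases ha with rfl | ha
        · by_cases hbc : b = a
          · exact Or.inl hbc
          · exact Or.inr (h.2 b hba hbc)
        · exact Or.inr (Y.isLowerSet hba ha) }
  else Y

/-- The finset of squares removable from the Young diagram `Y`: the corners of `Y`. -/
def removables (Y : YoungDiagram) : Finset (ℕ × ℕ) :=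
  Y.cells.filter fun c => (c.1 + 1, c.2) ∉ Y.cells ∧ (c.1, c.2 + 1) ∉ Y.cells

/-- Remove a square from a Young diagram (when the result is again a Young diagram;
junk value `Y` otherwise). -/
def removeBox (Y : YoungDiagram) (c : ℕ × ℕ) : YoungDiagram :=
  if h : (c.1 + 1, c.2) ∉ Y.cells ∧ (c.1, c.2 + 1) ∉ Y.cells then
    { cells := Y.cells.erase c,
      isLowerSet := by
        intro a b hba ha
        rw [Finset.coe_erase, Set.mem_diff] at ha ⊢
        refine ⟨Y.isLowerSet hba ha.1, ?_⟩
        rintro rfl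
        rcases lt_or_eq_of_le hba with hlt | rfl
        · rcases Prod.lt_iff.mp hlt with ⟨h1, h2⟩ | ⟨h1, h2⟩
          · exact h.1 (Y.isLowerSet (Prod.mk_le_mk.mpr ⟨h1, h2⟩) ha.1)
          · exact h.2 (Y.isLowerSet (Prod.mk_le_mk.mpr ⟨h1, h2⟩) ha.1)
        · exact ha.2 rfl }
  else Y

end

/-!
Write `H(Y)` for the product of the hook lengths of `Y`. The identity follows by induction on `n`
from two sums over the neighbours of a diagram in Young's lattice: the ratios `H(L) / H(L - c)` over
the removable cells `c` of `L` sum to `|L|`, and the terms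
`(z + c(□)) (z' + c(□)) H(Y) / H(Y + c)` over the addable cells `c` of `Y` sum to `z z' + |Y|`.
Indeed, weighting the edges between levels `n` and `n + 1` by
`∏_{□ ∈ L} (z + c(□)) (z' + c(□)) / (H(Y) H(L))` and summing the weights from either end shows that
the sum of `∏ (z + c(□)) (z' + c(□)) / h(□)²` at level `n + 1` is `(z z' + n) / (n + 1)` times the
one at level `n`.

For the two sums, Frobenius' formula expresses `H(Y)` through the beta-numbers
`β i = λ_i + N - 1 - i` as `∏ (β i)! / ∏_{i < j} (β i - β j)`. Adding or removing a cell shifts one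
beta-number by `h = ±1`, so the hook ratios are the residues of `∏ (1 + h / (t - β i))` up to simple
factors; they vanish at the rows where no cell can be added or removed, and the sums are read off
from the partial fraction expansion.
-/

section PartialFractions

variable {ι K : Type*} [DecidableEq ι]

lemma ne_of_injOn_insert {s : Finset ι} {x : ι → K} {i k : ι}
    (hx : Set.InjOn x (insert k s : Finset ι)) (hk : k ∉ s) (hi : i ∈ s) : x k ≠ x i := fun e =>
  hk (hx (Finset.mem_insert_self k s) (Finset.mem_insert_of_mem hi) e ▸ hi)

variable [Field K]

/-- For `i ∈ s`, distinct nodes `x` and `h ≠ 0`, this is `h⁻¹` times the residue at `t = x i` of the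
rational function `∏ j ∈ s, (1 + h / (t - x j))`; it is also the factor by which the Vandermonde
product of the nodes changes when `x i` is shifted by `h`. -/
def shiftResidue (h : K) (s : Finset ι) (x : ι → K) (i : ι) : K :=
  ∏ j ∈ s.erase i, (1 + h / (x i - x j))

variable {h : K} {s : Finset ι} {x : ι → K} {i k : ι}

lemma shiftResidue_insert_of_mem (hk : k ∉ s) (hi : i ∈ s) :
    shiftResidue h (insert k s) x i = shiftResidue h s x i * (1 + h / (x i - x k)) := by
  have hki : k ≠ i := fun e => hk (e ▸ hi)
  rw [shiftResidue, Finset.erase_insert_of_ne hki, Finset.prod_insert (by simp [hk]), mul_comm,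
    shiftResidue]

lemma shiftResidue_insert_self (hk : k ∉ s) :
    shiftResidue h (insert k s) x k = ∏ j ∈ s, (1 + h / (x k - x j)) := by
  rw [shiftResidue, Finset.erase_insert hk]

lemma shiftResidue_eq_zero (hk : k ∈ s) (hki : k ≠ i) (hh : h ≠ 0) (hx : x k = x i + h) :
    shiftResidue h s x i = 0 := by
  refine Finset.prod_eq_zero (Finset.mem_erase.mpr ⟨hki, hk⟩) ?_
  rw [hx, sub_add_cancel_left, div_neg, div_self hh, add_neg_cancel]

lemma prod_one_add_div_sub (h : K) (hx : Set.InjOn x s) {t : K} (ht : ∀ i ∈ s, t ≠ x i) :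
    ∏ j ∈ s, (1 + h / (t - x j)) = 1 + h * ∑ i ∈ s, shiftResidue h s x i / (t - x i) := by
  induction s using Finset.induction_on generalizing t with
  | empty => simp
  | insert k s hk ih =>
    have hxs : Set.InjOn x s := hx.mono (by simp)
    have hxk : ∀ i ∈ s, x k ≠ x i := fun i hi => ne_of_injOn_insert hx hk hi
    have htk : t - x k ≠ 0 := sub_ne_zero.mpr (ht k (Finset.mem_insert_self k s))
    have hts : ∀ i ∈ s, t ≠ x i := fun i hi => ht i (Finset.mem_insert_of_mem hi)
    have split_pole : ∑ i ∈ s, shiftResidue h (insert k s) x i / (t - x i)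
        = (1 + h / (t - x k)) * ∑ i ∈ s, shiftResidue h s x i / (t - x i)
          - h * (∑ i ∈ s, shiftResidue h s x i / (x k - x i)) / (t - x k) := by
      rw [Finset.mul_sum, Finset.mul_sum, Finset.sum_div, ← Finset.sum_sub_distrib]
      refine Finset.sum_congr rfl fun i hi => ?_
      have hti := sub_ne_zero.mpr (hts i hi)
      have hki := sub_ne_zero.mpr (hxk i hi)
      rw [shiftResidue_insert_of_mem hk hi, ← neg_sub (x k) (x i)]
      field_simp
      ring
    rw [Finset.prod_insert hk, Finset.sum_insert hk, shiftResidue_insert_self hk, ih hxs hxk,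
      ih hxs hts, split_pole]
    ring

lemma sum_shiftResidue (h : K) (hx : Set.InjOn x s) :
    ∑ i ∈ s, shiftResidue h s x i = s.card := by
  induction s using Finset.induction_on with
  | empty => simp
  | insert k s hk ih =>
    have hxs : Set.InjOn x s := hx.mono (by simp)
    have hxk : ∀ i ∈ s, x k ≠ x i := fun i hi => ne_of_injOn_insert hx hk hi
    have split_node : ∑ i ∈ s, shiftResidue h (insert k s) x i
        = ∑ i ∈ s, shiftResidue h s x i - h * ∑ i ∈ s, shiftResidue h s x i / (x k - x i) := by
      rw [Finset.mul_sum, ← Finset.sum_sub_distrib]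
      refine Finset.sum_congr rfl fun i hi => ?_
      rw [shiftResidue_insert_of_mem hk hi, ← neg_sub (x k) (x i), div_neg]
      ring
    rw [Finset.sum_insert hk, shiftResidue_insert_self hk, prod_one_add_div_sub h hxs hxk,
      split_node, ih hxs, Finset.card_insert_of_notMem hk]
    push_cast
    ring

lemma sum_shiftResidue_mul (h : K) (hx : Set.InjOn x s) :
    ∑ i ∈ s, shiftResidue h s x i * x i = ∑ i ∈ s, x i + h * (s.card.choose 2 : ℕ) := by
  induction s using Finset.induction_on with
  | empty => simp
  | insert k s hk ih =>
    have hxs : Set.InjOn x s := hx.mono (by simp)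
    have hxk : ∀ i ∈ s, x k ≠ x i := fun i hi => ne_of_injOn_insert hx hk hi
    have split_node : ∑ i ∈ s, shiftResidue h (insert k s) x i * x i
        = ∑ i ∈ s, shiftResidue h s x i * x i + h * ∑ i ∈ s, shiftResidue h s x i
          - h * (∑ i ∈ s, shiftResidue h s x i / (x k - x i)) * x k := by
      rw [Finset.mul_sum, Finset.mul_sum, Finset.sum_mul, ← Finset.sum_add_distrib,
        ← Finset.sum_sub_distrib]
      refine Finset.sum_congr rfl fun i hi => ?_
      have hki := sub_ne_zero.mpr (hxk i hi)
      rw [shiftResidue_insert_of_mem hk hi, ← neg_sub (x k) (x i)]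
      field_simp
      ring
    rw [Finset.sum_insert hk, Finset.sum_insert hk, shiftResidue_insert_self hk,
      prod_one_add_div_sub h hxs hxk, split_node, ih hxs, sum_shiftResidue h hxs,
      Finset.card_insert_of_notMem hk, Nat.choose_succ_succ' s.card 1, Nat.choose_one_right]
    push_cast
    ring

lemma sum_shiftResidue_one_div_add_one (hx : Set.InjOn x s) (h0 : ∃ k ∈ s, x k = 0)
    (hne : ∀ i ∈ s, x i + 1 ≠ 0) :
    ∑ i ∈ s, shiftResidue 1 s x i / (x i + 1) = 1 := by
  obtain ⟨k, hk, hk0⟩ := h0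
  have expansion := prod_one_add_div_sub 1 hx (t := -1)
    fun i hi e => hne i hi (by rw [← e, neg_add_cancel])
  have neg_poles : ∀ i, (-1 : K) - x i = -(x i + 1) := fun i => by ring
  rw [Finset.prod_eq_zero hk (by rw [hk0]; norm_num)] at expansion
  simp only [neg_poles, div_neg, Finset.sum_neg_distrib] at expansion
  linear_combination expansion

lemma sum_mul_shiftResidue_one_div_add_one (hx : Set.InjOn x s) (h0 : ∃ k ∈ s, x k = 0)
    (hne : ∀ i ∈ s, x i + 1 ≠ 0) (u v : K) :
    ∑ i ∈ s, (u + (x i + 1)) * (v + (x i + 1)) * (shiftResidue 1 s x i / (x i + 1))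
      = u * v + (u + v + 1) * s.card + ∑ i ∈ s, x i + (s.card.choose 2 : ℕ) := by
  have expand : ∀ i ∈ s,
      (u + (x i + 1)) * (v + (x i + 1)) * (shiftResidue 1 s x i / (x i + 1))
        = u * v * (shiftResidue 1 s x i / (x i + 1)) + (u + v + 1) * shiftResidue 1 s x i
          + shiftResidue 1 s x i * x i := fun i hi => by
    have := hne i hi
    field_simp
    ring
  rw [Finset.sum_congr rfl expand, Finset.sum_add_distrib, Finset.sum_add_distrib,
    ← Finset.mul_sum, ← Finset.mul_sum, sum_shiftResidue_one_div_add_one hx h0 hne,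
    sum_shiftResidue 1 hx, sum_shiftResidue_mul 1 hx]
  ring

end PartialFractions

section Vandermonde

variable {ι : Type*} [LinearOrder ι]

/-- The Vandermonde product `∏ (x i - x j)` over the pairs `i < j` in `s`; with this sign it is
positive for decreasing sequences such as the beta-numbers of a diagram. -/
def vandermondeProd {R : Type*} [CommRing R] (s : Finset ι) (x : ι → R) : R :=
  ∏ i ∈ s, ∏ j ∈ s with i < j, (x i - x j)

lemma vandermondeProd_ne_zero {R : Type*} [CommRing R] [IsDomain R] {s : Finset ι} {x : ι → R}
    (hx : Set.InjOn x s) : vandermondeProd s x ≠ 0 :=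
  Finset.prod_ne_zero_iff.mpr fun _ hi => Finset.prod_ne_zero_iff.mpr fun _ hj =>
    have hj := Finset.mem_filter.mp hj
    sub_ne_zero.mpr fun e => hj.2.ne (hx hi hj.1 e)

lemma prod_filter_gt_mul_prod_filter_lt {M : Type*} [CommMonoid M] (s : Finset ι) (i : ι)
    (g : ι → M) :
    (∏ j ∈ s with i < j, g j) * ∏ j ∈ s with j < i, g j = ∏ j ∈ s.erase i, g j := by
  rw [← Finset.prod_union (Finset.disjoint_filter.mpr fun j _ => lt_asymm), ← Finset.filter_or]
  refine Finset.prod_congr ?_ fun _ _ => rfl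
  ext j
  rw [Finset.mem_filter, Finset.mem_erase, and_comm, or_comm, lt_or_lt_iff_ne]

lemma vandermondeProd_update_add {K : Type*} [Field K] {s : Finset ι} {x : ι → K} {i : ι} (h : K)
    (hx : Set.InjOn x s) (hi : i ∈ s) :
    vandermondeProd s (Function.update x i (x i + h))
      = vandermondeProd s x * shiftResidue h s x i := by
  set g : ι → K := fun j => 1 + h / (x i - x j) with hg
  have factor : ∀ a ∈ s, ∀ b ∈ s.filter (a < ·),
      Function.update x i (x i + h) a - Function.update x i (x i + h) b
        = (x a - x b) * ((if a = i then g b else 1) * if b = i then g a else 1) := by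
    intro a ha b hb
    obtain ⟨hb, hab⟩ := Finset.mem_filter.mp hb
    have hne : x a - x b ≠ 0 := sub_ne_zero.mpr fun e => hab.ne (hx ha hb e)
    rcases eq_or_ne a i with rfl | hai
    · simp only [hg, Function.update_self, Function.update_of_ne hab.ne', if_true, hab.ne',
        if_false]
      field_simp
      ring
    · rcases eq_or_ne b i with rfl | hbi
      · have hne' := sub_ne_zero.mpr (sub_ne_zero.mp hne).symm
        simp only [hg, Function.update_self, Function.update_of_ne hai, if_true, hai, if_false]
        field_simp
        ring
      · simp [hai, hbi]
  have pairs_from_i : ∏ a ∈ s, ∏ b ∈ s with a < b, (if a = i then g b else 1)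
      = ∏ j ∈ s with i < j, g j := by
    rw [Finset.prod_eq_single_of_mem i hi fun a _ hai => by simp [hai]]
    simp
  have pairs_to_i : ∏ a ∈ s, ∏ b ∈ s with a < b, (if b = i then g a else 1)
      = ∏ j ∈ s with j < i, g j := by
    simp [Finset.prod_ite_eq', Finset.prod_filter _ g, hi]
  rw [vandermondeProd, Finset.prod_congr rfl fun a ha => Finset.prod_congr rfl (factor a ha)]
  simp only [Finset.prod_mul_distrib]
  rw [pairs_from_i, pairs_to_i, prod_filter_gt_mul_prod_filter_lt, vandermondeProd, shiftResidue]

end Vandermonde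

section Rows

variable {Y : YoungDiagram} {N i j : ℕ}

lemma lt_rowLen_iff_lt_colLen : j < Y.rowLen i ↔ i < Y.colLen j := by
  rw [← YoungDiagram.mem_iff_lt_rowLen, YoungDiagram.mem_iff_lt_colLen]

@[to_additive]
lemma prod_cells_eq_prod_rows {M : Type*} [CommMonoid M] (hN : Y.colLen 0 ≤ N) (g : ℕ × ℕ → M) :
    ∏ c ∈ Y.cells, g c = ∏ i ∈ Finset.range N, ∏ j ∈ Finset.range (Y.rowLen i), g (i, j) := by
  refine Finset.prod_finset_product _ _ (fun i => Finset.range (Y.rowLen i)) fun ⟨i, j⟩ => ?_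
  rw [YoungDiagram.mem_cells, YoungDiagram.mem_iff_lt_rowLen, Finset.mem_range, Finset.mem_range,
    iff_and_self]
  exact fun h => (lt_rowLen_iff_lt_colLen.mp (Nat.zero_lt_of_lt h)).trans_le hN

lemma hookLen_add (h : j < Y.rowLen i) :
    hookLen Y (i, j) + (i + j + 1) = Y.rowLen i + Y.colLen j := by
  have := lt_rowLen_iff_lt_colLen.mp h
  simp only [hookLen]
  omega

lemma strictAntiOn_hookLen (Y : YoungDiagram) (i : ℕ) :
    StrictAntiOn (fun j => hookLen Y (i, j)) (Finset.range (Y.rowLen i)) := by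
  intro a ha b hb hab
  have := hookLen_add (Finset.mem_range.mp ha)
  have := hookLen_add (Finset.mem_range.mp hb)
  have := Y.colLen_anti a b hab.le
  dsimp only
  omega

/-- The beta-number `λ_i + N - 1 - i` of row `i < N` (rows indexed from `0`).  For diagrams with at
most `N` rows, the beta-numbers of the rows `0, …, N - 1` form a strictly decreasing sequence which
determines the diagram. -/
def betaNumber (N : ℕ) (Y : YoungDiagram) (i : ℕ) : ℕ := Y.rowLen i + (N - 1 - i)

lemma strictAntiOn_betaNumber (N : ℕ) (Y : YoungDiagram) :
    StrictAntiOn (betaNumber N Y) (Finset.range N) := by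
  intro a _ b hb hab
  have := Y.rowLen_anti a b hab.le
  have := Finset.mem_range.mp hb
  simp only [betaNumber]
  omega

lemma injOn_cast_betaNumber (R : Type*) [AddMonoidWithOne R] [CharZero R] (N : ℕ)
    (Y : YoungDiagram) : Set.InjOn (fun i => (betaNumber N Y i : R)) (Finset.range N) :=
  Nat.cast_injective.comp_injOn (strictAntiOn_betaNumber N Y).injOn

lemma cast_cellContent_mk_rowLen {R : Type*} [CommRing R] (hi : i < N) :
    (cellContent (i, Y.rowLen i) : R) = betaNumber N Y i + 1 - N := by
  have : (betaNumber N Y i : ℤ) + 1 - N = cellContent (i, Y.rowLen i) := by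
    simp only [betaNumber, cellContent]
    omega
  rw [← this]
  push_cast
  rfl

lemma sum_betaNumber (hN : Y.colLen 0 ≤ N) :
    ∑ i ∈ Finset.range N, betaNumber N Y i = Y.card + N.choose 2 := by
  have card_eq_sum_rowLen : Y.card = ∑ i ∈ Finset.range N, Y.rowLen i := by
    rw [YoungDiagram.card, Finset.card_eq_sum_ones, sum_cells_eq_sum_rows hN]
    simp only [Finset.sum_const, Finset.card_range, smul_eq_mul, mul_one]
  simp only [betaNumber]
  rw [Finset.sum_add_distrib, Finset.sum_range_reflect (fun m => m), Finset.sum_range_id,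
    ← Nat.choose_two_right, card_eq_sum_rowLen]

end Rows

section HookProduct

variable {Y : YoungDiagram} {N i j k : ℕ}

lemma hookLen_ne_betaNumber_sub (hj : j < Y.rowLen i) (hik : i < k) (hk : k < N) :
    hookLen Y (i, j) ≠ betaNumber N Y i - betaNumber N Y k := by
  have := hookLen_add hj
  have := Y.rowLen_anti i k hik.le
  have := lt_rowLen_iff_lt_colLen (Y := Y) (i := k) (j := j)
  simp only [betaNumber]
  omega

lemma strictMonoOn_betaNumber_sub (N : ℕ) (Y : YoungDiagram) (i : ℕ) :
    StrictMonoOn (fun k => betaNumber N Y i - betaNumber N Y k)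
      ({k ∈ Finset.range N | i < k} : Finset ℕ) := by
  intro a ha b hb hab
  obtain ⟨ha, hia⟩ := Finset.mem_filter.mp ha
  obtain ⟨hb, -⟩ := Finset.mem_filter.mp hb
  have := strictAntiOn_betaNumber N Y ha hb hab
  have := strictAntiOn_betaNumber N Y (Finset.mem_range.mpr (by grind)) ha hia
  dsimp only
  omega

lemma disjoint_image_hookLen_image_betaNumber_sub :
    Disjoint ((Finset.range (Y.rowLen i)).image fun j => hookLen Y (i, j))
      ({k ∈ Finset.range N | i < k}.image fun k => betaNumber N Y i - betaNumber N Y k) := by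
  simp only [Finset.disjoint_left, Finset.mem_image, Finset.mem_filter, Finset.mem_range]
  rintro _ ⟨j, hj, rfl⟩ ⟨k, ⟨hk, hik⟩, h⟩
  exact hookLen_ne_betaNumber_sub hj hik hk h.symm

lemma image_hookLen_union_image_betaNumber_sub (hN : Y.colLen 0 ≤ N) (hi : i < N) :
    (Finset.range (Y.rowLen i)).image (fun j => hookLen Y (i, j)) ∪
        {k ∈ Finset.range N | i < k}.image (fun k => betaNumber N Y i - betaNumber N Y k)
      = Finset.Ico 1 (betaNumber N Y i + 1) := by
  refine Finset.eq_of_subset_of_card_le ?_ ?_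
  · simp only [Finset.union_subset_iff, Finset.image_subset_iff, Finset.mem_filter,
      Finset.mem_range, Finset.mem_Ico]
    refine ⟨fun j hj => ?_, fun k ⟨hk, hik⟩ => ?_⟩
    · have := hookLen_add hj
      have := lt_rowLen_iff_lt_colLen.mp hj
      have := Y.colLen_anti 0 j (Nat.zero_le j)
      simp only [betaNumber]
      omega
    · have := strictAntiOn_betaNumber N Y (Finset.mem_range.mpr hi) (Finset.mem_range.mpr hk) hik
      omega
  · have card_rows_below : ({k ∈ Finset.range N | i < k}).card = N - 1 - i := by
      rw [show {k ∈ Finset.range N | i < k} = Finset.Ioo i N by ext; simp [and_comm],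
        Nat.card_Ioo, Nat.sub_right_comm]
    rw [Finset.card_union_of_disjoint disjoint_image_hookLen_image_betaNumber_sub,
      Finset.card_image_of_injOn (strictAntiOn_hookLen Y i).injOn,
      Finset.card_image_of_injOn (strictMonoOn_betaNumber_sub N Y i).injOn, Finset.card_range,
      card_rows_below, Nat.card_Ico, Nat.add_sub_cancel, betaNumber]

lemma prod_hookLen_row_mul_prod_betaNumber_sub (hN : Y.colLen 0 ≤ N) (hi : i < N) :
    (∏ j ∈ Finset.range (Y.rowLen i), hookLen Y (i, j)) *
        ∏ k ∈ Finset.range N with i < k, (betaNumber N Y i - betaNumber N Y k)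
      = (betaNumber N Y i).factorial := by
  rw [← Finset.prod_image (f := fun m => m) (strictAntiOn_hookLen Y i).injOn,
    ← Finset.prod_image (f := fun m => m) (strictMonoOn_betaNumber_sub N Y i).injOn,
    ← Finset.prod_union disjoint_image_hookLen_image_betaNumber_sub,
    image_hookLen_union_image_betaNumber_sub hN hi, ← Finset.prod_Ico_id_eq_factorial]

/-- The product of all hook lengths of a Young diagram; it equals `|Y|!` divided by the number of
standard Young tableaux of shape `Y`. -/
def hookProd (Y : YoungDiagram) : ℕ := ∏ c ∈ Y.cells, hookLen Y c

lemma hookProd_ne_zero (Y : YoungDiagram) : hookProd Y ≠ 0 := by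
  refine Finset.prod_ne_zero_iff.mpr fun ⟨i, j⟩ hc => ?_
  have hj := YoungDiagram.mem_iff_lt_rowLen.mp hc
  have := hookLen_add hj
  have := lt_rowLen_iff_lt_colLen.mp hj
  omega

theorem hookProd_mul_vandermondeProd (R : Type*) [CommRing R] (hN : Y.colLen 0 ≤ N) :
    (hookProd Y : R) * vandermondeProd (Finset.range N) (fun i => (betaNumber N Y i : R))
      = ∏ i ∈ Finset.range N, ((betaNumber N Y i).factorial : R) := by
  rw [hookProd, prod_cells_eq_prod_rows hN, vandermondeProd, Nat.cast_prod,
    ← Finset.prod_mul_distrib]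
  refine Finset.prod_congr rfl fun i hi => ?_
  rw [← prod_hookLen_row_mul_prod_betaNumber_sub hN (Finset.mem_range.mp hi), Nat.cast_mul,
    Nat.cast_prod _ (Finset.filter _ _)]
  congr 1
  refine Finset.prod_congr rfl fun k hk => ?_
  obtain ⟨hk, hik⟩ := Finset.mem_filter.mp hk
  exact (Nat.cast_sub (strictAntiOn_betaNumber N Y hi hk hik).le).symm

end HookProduct

section AddRemove

variable {Y : YoungDiagram} {N i : ℕ} {c : ℕ × ℕ}

lemma mem_addables_iff :
    c ∈ addables Y ↔ c ∉ Y.cells ∧ ∀ d : ℕ × ℕ, d ≤ c → d ≠ c → d ∈ Y.cells := by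
  simp only [addables, Finset.mem_filter, Finset.mem_image, Finset.mem_range,
    YoungDiagram.mem_cells]
  refine and_congr_left fun hc => ⟨?_, fun hcY => ⟨c.1, ?_, Prod.ext rfl ?_⟩⟩
  · rintro ⟨i, -, rfl⟩
    simp [YoungDiagram.mem_iff_lt_rowLen]
  · by_contra! hlt
    have := YoungDiagram.mem_iff_lt_colLen.mp <|
      hc (Y.colLen 0, 0) ⟨by dsimp; omega, Nat.zero_le _⟩ fun e => by grind
    omega
  · have hle : Y.rowLen c.1 ≤ c.2 := not_lt.mp fun h => hcY (YoungDiagram.mem_iff_lt_rowLen.mpr h)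
    by_contra hne
    exact lt_irrefl _ <| YoungDiagram.mem_iff_lt_rowLen.mp <|
      hc (c.1, Y.rowLen c.1) ⟨le_rfl, hle⟩ fun e => hne (congrArg Prod.snd e)

lemma rowLen_fst_of_mem_addables (hc : c ∈ addables Y) : Y.rowLen c.1 = c.2 := by
  obtain ⟨i, -, rfl⟩ := Finset.mem_image.mp (Finset.mem_filter.mp hc).1
  rfl

lemma fst_le_colLen_of_mem_addables (hc : c ∈ addables Y) : c.1 ≤ Y.colLen 0 := by
  obtain ⟨i, hi, rfl⟩ := Finset.mem_image.mp (Finset.mem_filter.mp hc).1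
  exact Nat.lt_succ_iff.mp (Finset.mem_range.mp hi)

lemma mk_rowLen_mem_addables (h : ∀ k < i, Y.rowLen i < Y.rowLen k) :
    (i, Y.rowLen i) ∈ addables Y := by
  refine mem_addables_iff.mpr ⟨by simp [YoungDiagram.mem_iff_lt_rowLen], ?_⟩
  rintro ⟨a, b⟩ ⟨ha, hb⟩ hne
  rw [YoungDiagram.mem_cells, YoungDiagram.mem_iff_lt_rowLen]
  rcases ha.lt_or_eq with hlt | rfl
  · exact hb.trans_lt (h a hlt)
  · exact lt_of_le_of_ne hb fun e => hne (Prod.ext rfl e)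

lemma mem_removables_iff :
    c ∈ removables Y ↔ Y.rowLen c.1 = c.2 + 1 ∧ Y.rowLen (c.1 + 1) ≤ c.2 := by
  rw [removables, Finset.mem_filter, ← Prod.mk.eta (p := c)]
  simp only [YoungDiagram.mem_cells, YoungDiagram.mem_iff_lt_rowLen]
  omega

lemma cells_addBox (hc : c ∈ addables Y) : (addBox Y c).cells = insert c Y.cells := by
  rw [addBox, dif_pos (mem_addables_iff.mp hc)]

lemma cells_removeBox (hc : c ∈ removables Y) : (removeBox Y c).cells = Y.cells.erase c := by
  rw [removeBox, dif_pos (Finset.mem_filter.mp hc).2]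

lemma card_addBox (hc : c ∈ addables Y) : (addBox Y c).card = Y.card + 1 := by
  rw [YoungDiagram.card, cells_addBox hc,
    Finset.card_insert_of_notMem (mem_addables_iff.mp hc).1]

lemma card_removeBox (hc : c ∈ removables Y) : (removeBox Y c).card + 1 = Y.card := by
  rw [YoungDiagram.card, cells_removeBox hc, Finset.card_erase_add_one (Finset.mem_filter.mp hc).1]

lemma mem_removables_addBox (hc : c ∈ addables Y) : c ∈ removables (addBox Y c) := by
  have hcY := (mem_addables_iff.mp hc).1
  simp only [removables, cells_addBox hc, Finset.mem_filter, Finset.mem_insert_self, true_and,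
    Finset.mem_insert, not_or]
  exact ⟨⟨fun e => by grind, fun h => hcY (Y.up_left_mem (Nat.le_succ _) le_rfl h)⟩,
    ⟨fun e => by grind, fun h => hcY (Y.up_left_mem le_rfl (Nat.le_succ _) h)⟩⟩

lemma mem_addables_removeBox (hc : c ∈ removables Y) : c ∈ addables (removeBox Y c) := by
  simp only [mem_addables_iff, cells_removeBox hc]
  exact ⟨Finset.notMem_erase c _, fun d hdc hne =>
    Finset.mem_erase.mpr ⟨hne, Y.isLowerSet hdc (Finset.mem_filter.mp hc).1⟩⟩

lemma removeBox_addBox (hc : c ∈ addables Y) : removeBox (addBox Y c) c = Y :=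
  YoungDiagram.ext <| by
    rw [cells_removeBox (mem_removables_addBox hc), cells_addBox hc,
      Finset.erase_insert (mem_addables_iff.mp hc).1]

lemma addBox_removeBox (hc : c ∈ removables Y) : addBox (removeBox Y c) c = Y :=
  YoungDiagram.ext <| by
    rw [cells_addBox (mem_addables_removeBox hc), cells_removeBox hc,
      Finset.insert_erase (Finset.mem_filter.mp hc).1]

lemma rowLen_addBox (hc : c ∈ addables Y) :
    (addBox Y c).rowLen = Function.update Y.rowLen c.1 (Y.rowLen c.1 + 1) := by
  funext k
  refine eq_of_forall_lt_iff fun j => ?_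
  rw [← YoungDiagram.mem_iff_lt_rowLen, ← YoungDiagram.mem_cells, cells_addBox hc,
    Finset.mem_insert, YoungDiagram.mem_cells, YoungDiagram.mem_iff_lt_rowLen, Prod.ext_iff,
    ← rowLen_fst_of_mem_addables hc, Function.update_apply]
  split_ifs with h
  · subst h
    dsimp only
    omega
  · simp [h]

lemma betaNumber_addBox (hc : c ∈ addables Y) :
    betaNumber N (addBox Y c) = Function.update (betaNumber N Y) c.1 (betaNumber N Y c.1 + 1) := by
  funext k
  simp only [betaNumber, rowLen_addBox hc, Function.update_apply]
  split_ifs with h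
  · subst h
    omega
  · rfl

lemma colLen_zero_le_iff : Y.colLen 0 ≤ N ↔ Y.rowLen N = 0 := by
  rw [← not_lt, ← lt_rowLen_iff_lt_colLen, Nat.pos_iff_ne_zero, not_not]

lemma colLen_zero_addBox_le_iff (hc : c ∈ addables Y) :
    (addBox Y c).colLen 0 ≤ N ↔ Y.colLen 0 ≤ N ∧ c.1 < N := by
  have hcol := fst_le_colLen_of_mem_addables hc
  rw [colLen_zero_le_iff, rowLen_addBox hc, Function.update_apply]
  split_ifs with h
  · exact iff_of_false id fun hlt => hlt.2.ne' h
  · rw [← colLen_zero_le_iff]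
    omega

end AddRemove

section HookRatio

variable {Y : YoungDiagram} {N i : ℕ} {c : ℕ × ℕ}

lemma prod_factorial_betaNumber_addBox (hc : c ∈ addables Y) (hcN : c.1 < N) :
    ∏ i ∈ Finset.range N, (betaNumber N (addBox Y c) i).factorial
      = (betaNumber N Y c.1 + 1) * ∏ i ∈ Finset.range N, (betaNumber N Y i).factorial := by
  have hmem := Finset.mem_range.mpr hcN
  rw [← Finset.mul_prod_erase _ _ hmem, ← Finset.mul_prod_erase _ _ hmem, ← mul_assoc,
    ← Nat.factorial_succ, betaNumber_addBox hc, Function.update_self]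
  congr 1
  refine Finset.prod_congr rfl fun i hi => ?_
  rw [Function.update_of_ne (Finset.ne_of_mem_erase hi)]

lemma cast_betaNumber_addBox {R : Type*} [AddMonoidWithOne R] (hc : c ∈ addables Y) :
    (fun i => (betaNumber N (addBox Y c) i : R))
      = Function.update (fun i => (betaNumber N Y i : R)) c.1 (betaNumber N Y c.1 + 1) := by
  rw [betaNumber_addBox hc]
  funext i
  simp only [Function.update_apply]
  split_ifs <;> simp

lemma cast_betaNumber_removeBox {R : Type*} [Ring R] (hc : c ∈ removables Y) :
    (fun i => (betaNumber N (removeBox Y c) i : R))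
      = Function.update (fun i => (betaNumber N Y i : R)) c.1 (betaNumber N Y c.1 + -1) := by
  have h := cast_betaNumber_addBox (R := R) (N := N) (mem_addables_removeBox hc)
  rw [addBox_removeBox hc] at h
  rw [congrFun h c.1, h, Function.update_self, Function.update_idem, add_neg_cancel_right,
    Function.update_eq_self]

lemma hookProd_addBox_mul_vandermondeProd (R : Type*) [CommRing R] (hc : c ∈ addables Y)
    (hN : (addBox Y c).colLen 0 ≤ N) :
    (hookProd (addBox Y c) : R) *
        vandermondeProd (Finset.range N) (fun i => (betaNumber N (addBox Y c) i : R))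
      = (betaNumber N Y c.1 + 1) * (hookProd Y *
        vandermondeProd (Finset.range N) fun i => (betaNumber N Y i : R)) := by
  obtain ⟨hNY, hcN⟩ := (colLen_zero_addBox_le_iff hc).mp hN
  rw [hookProd_mul_vandermondeProd R hN, hookProd_mul_vandermondeProd R hNY]
  exact_mod_cast congrArg (Nat.cast (R := R)) (prod_factorial_betaNumber_addBox hc hcN)

variable {K : Type*} [Field K]

lemma shiftResidue_betaNumber_eq_zero_of_notMem_addables (hi : i < N)
    (h : (i, Y.rowLen i) ∉ addables Y) :
    shiftResidue 1 (Finset.range N) (fun i => (betaNumber N Y i : K)) i = 0 := by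
  obtain ⟨k, hki, hk⟩ : ∃ k < i, Y.rowLen k ≤ Y.rowLen i := by
    by_contra! hlt
    exact h (mk_rowLen_mem_addables hlt)
  have := Y.rowLen_anti k (i - 1) (by omega)
  have := Y.rowLen_anti (i - 1) i (by omega)
  have pred_row : betaNumber N Y (i - 1) = betaNumber N Y i + 1 := by
    simp only [betaNumber]
    omega
  exact shiftResidue_eq_zero (k := i - 1) (Finset.mem_range.mpr (by omega)) (by omega)
    one_ne_zero (by rw [pred_row, Nat.cast_add_one])

lemma shiftResidue_betaNumber_eq_zero_of_notMem_removables (hN : Y.colLen 0 ≤ N)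
    (hi : i < Y.colLen 0) (h : (i, Y.rowLen i - 1) ∉ removables Y) :
    shiftResidue (-1) (Finset.range N) (fun i => (betaNumber N Y i : K)) i = 0 := by
  have hpos : 0 < Y.rowLen i := lt_rowLen_iff_lt_colLen.mpr hi
  have := Y.rowLen_anti i (i + 1) (by omega)
  rw [mem_removables_iff] at h
  have hsucc : i + 1 < Y.colLen 0 := lt_rowLen_iff_lt_colLen.mp (by grind)
  have succ_row : betaNumber N Y (i + 1) + 1 = betaNumber N Y i := by
    simp only [betaNumber]
    grind
  refine shiftResidue_eq_zero (k := i + 1) (Finset.mem_range.mpr (by omega)) (by omega)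
    (neg_ne_zero.mpr one_ne_zero) ?_
  rw [← succ_row, Nat.cast_add_one, add_neg_cancel_right]

variable [CharZero K]

lemma hookProd_div_hookProd_addBox (hc : c ∈ addables Y) (hN : (addBox Y c).colLen 0 ≤ N) :
    (hookProd Y / hookProd (addBox Y c) : K)
      = shiftResidue 1 (Finset.range N) (fun i => (betaNumber N Y i : K)) c.1
          / (betaNumber N Y c.1 + 1) := by
  have hcN := Finset.mem_range.mpr ((colLen_zero_addBox_le_iff hc).mp hN).2
  have hx := injOn_cast_betaNumber K N Y
  have key := hookProd_addBox_mul_vandermondeProd K hc hN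
  rw [cast_betaNumber_addBox hc, vandermondeProd_update_add 1 hx hcN] at key
  rw [div_eq_div_iff (Nat.cast_ne_zero.mpr (hookProd_ne_zero _)) (Nat.cast_add_one_ne_zero _)]
  refine mul_left_cancel₀ (vandermondeProd_ne_zero hx) ?_
  linear_combination -key

lemma hookProd_div_hookProd_removeBox (hc : c ∈ removables Y) (hN : Y.colLen 0 ≤ N) :
    (hookProd Y / hookProd (removeBox Y c) : K)
      = shiftResidue (-1) (Finset.range N) (fun i => (betaNumber N Y i : K)) c.1
          * betaNumber N Y c.1 := by
  have hc' := mem_addables_removeBox hc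
  have hx := injOn_cast_betaNumber K N Y
  have key := hookProd_addBox_mul_vandermondeProd K hc' (N := N) (by rwa [addBox_removeBox hc])
  have hcN : c.1 ∈ Finset.range N := by
    rw [← addBox_removeBox hc, colLen_zero_addBox_le_iff hc'] at hN
    exact Finset.mem_range.mpr hN.2
  have hβ := congrFun (cast_betaNumber_removeBox (R := K) (N := N) hc) c.1
  rw [Function.update_self] at hβ
  rw [addBox_removeBox hc, cast_betaNumber_removeBox hc, hβ,
    vandermondeProd_update_add (-1) hx hcN] at key
  rw [div_eq_iff (Nat.cast_ne_zero.mpr (hookProd_ne_zero _))]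
  refine mul_left_cancel₀ (vandermondeProd_ne_zero hx) ?_
  linear_combination key

theorem sum_addables_mul_hookProd_div (Y : YoungDiagram) (z z' : K) :
    ∑ c ∈ addables Y, (z + cellContent c) * (z' + cellContent c)
        * (hookProd Y / hookProd (addBox Y c)) = z * z' + Y.card := by
  obtain ⟨N, hN⟩ : ∃ N, N = Y.colLen 0 + 1 := ⟨_, rfl⟩
  have colLen_le : Y.colLen 0 ≤ N := hN ▸ Nat.le_succ _
  have row_mem {c} (hc : c ∈ addables Y) : c.1 < N :=
    hN ▸ Nat.lt_succ_of_le (fst_le_colLen_of_mem_addables hc)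
  have eq_mk {c} (hc : c ∈ addables Y) : c = (c.1, Y.rowLen c.1) :=
    Prod.ext rfl (rowLen_fst_of_mem_addables hc).symm
  have last_beta : betaNumber N Y (Y.colLen 0) = 0 := by
    simp [betaNumber, hN, colLen_zero_le_iff.mp le_rfl]
  have sum_rows := sum_mul_shiftResidue_one_div_add_one (injOn_cast_betaNumber K N Y)
    ⟨Y.colLen 0, Finset.mem_range.mpr (hN ▸ Nat.lt_succ_self _), by exact_mod_cast last_beta⟩
    (fun i _ => Nat.cast_add_one_ne_zero _) (z - N) (z' - N)
  rw [Finset.card_range, ← Nat.cast_sum, sum_betaNumber colLen_le, Nat.cast_add,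
    Nat.cast_choose_two K N] at sum_rows
  trans ∑ i ∈ Finset.range N, (z - N + (betaNumber N Y i + 1)) * (z' - N + (betaNumber N Y i + 1))
      * (shiftResidue 1 (Finset.range N) (fun i => (betaNumber N Y i : K)) i
        / (betaNumber N Y i + 1))
  · refine Finset.sum_of_injOn Prod.fst (fun c hc d hd e => ?_)
      (fun c hc => Finset.mem_range.mpr (row_mem hc)) (fun i hi hni => ?_) fun c hc => ?_
    · rw [eq_mk hc, eq_mk hd, e]
    · rw [shiftResidue_betaNumber_eq_zero_of_notMem_addables (Finset.mem_range.mp hi)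
        fun h => hni ⟨_, h, rfl⟩, zero_div, mul_zero]
    · rw [hookProd_div_hookProd_addBox hc
        ((colLen_zero_addBox_le_iff hc).mpr ⟨colLen_le, row_mem hc⟩)]
      conv_lhs => rw [eq_mk hc, cast_cellContent_mk_rowLen (row_mem hc)]
      ring
  · linear_combination sum_rows

theorem sum_removables_hookProd_div (Y : YoungDiagram) :
    ∑ c ∈ removables Y, (hookProd Y / hookProd (removeBox Y c) : K) = Y.card := by
  have sum_rows := sum_shiftResidue_mul (-1) (injOn_cast_betaNumber K (Y.colLen 0) Y)
  rw [Finset.card_range, ← Nat.cast_sum, sum_betaNumber le_rfl, Nat.cast_add] at sum_rows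
  trans ∑ i ∈ Finset.range (Y.colLen 0), shiftResidue (-1) (Finset.range (Y.colLen 0))
    (fun i => (betaNumber (Y.colLen 0) Y i : K)) i * betaNumber (Y.colLen 0) Y i
  · refine Finset.sum_of_injOn Prod.fst (fun c hc d hd e => ?_) (fun c hc => ?_)
      (fun i hi hni => ?_) fun c hc => hookProd_div_hookProd_removeBox hc le_rfl
    · have := (mem_removables_iff.mp hc).1
      have := (mem_removables_iff.mp hd).1
      grind
    · have := (mem_removables_iff.mp hc).1
      exact Finset.mem_range.mpr (lt_rowLen_iff_lt_colLen.mp (by omega))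
    · rw [shiftResidue_betaNumber_eq_zero_of_notMem_removables le_rfl (Finset.mem_range.mp hi)
        fun h => hni ⟨_, h, rfl⟩, zero_mul]
  · linear_combination sum_rows

end HookRatio

section GrowthGraph

variable {n : ℕ}

lemma card_le_of_mem_cells {Y : YoungDiagram} {i j : ℕ} (h : (i, j) ∈ Y.cells) :
    (i + 1) * (j + 1) ≤ Y.card := by
  have hsub : Finset.Iic (i, j) ⊆ Y.cells := fun d hd =>
    Y.isLowerSet (Finset.mem_Iic.mp hd) h
  simpa [Finset.card_Iic_prod] using Finset.card_le_card hsub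

lemma finite_setOf_card_eq (n : ℕ) : {Y : YoungDiagram | Y.card = n}.Finite := by
  refine Set.Finite.of_finite_image (f := YoungDiagram.cells) ?_
    fun _ _ _ _ e => YoungDiagram.ext e
  refine (Finset.range n ×ˢ Finset.range n).powerset.finite_toSet.subset ?_
  rintro _ ⟨Y, rfl, rfl⟩
  refine Finset.mem_coe.mpr (Finset.mem_powerset.mpr fun ⟨i, j⟩ hc => ?_)
  have := card_le_of_mem_cells hc
  rw [Finset.mem_product, Finset.mem_range, Finset.mem_range]
  constructor <;> nlinarith

/-- The Young diagrams with `n` cells, that is, the partitions of `n`. -/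
noncomputable def diagramsOfCard (n : ℕ) : Finset YoungDiagram := (finite_setOf_card_eq n).toFinset

lemma mem_diagramsOfCard {Y : YoungDiagram} : Y ∈ diagramsOfCard n ↔ Y.card = n :=
  (finite_setOf_card_eq n).mem_toFinset

lemma diagramsOfCard_zero : diagramsOfCard 0 = {⊥} := by
  ext Y
  rw [mem_diagramsOfCard, Finset.mem_singleton, YoungDiagram.card, Finset.card_eq_zero,
    YoungDiagram.ext_iff, YoungDiagram.cells_bot]

lemma sum_sum_removables_eq_sum_sum_addables {M : Type*} [AddCommMonoid M]
    (f : YoungDiagram → YoungDiagram → ℕ × ℕ → M) :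
    ∑ L ∈ diagramsOfCard (n + 1), ∑ c ∈ removables L, f (removeBox L c) L c
      = ∑ Y ∈ diagramsOfCard n, ∑ c ∈ addables Y, f Y (addBox Y c) c := by
  rw [Finset.sum_sigma', Finset.sum_sigma']
  refine Finset.sum_bij' (fun p _ => ⟨removeBox p.1 p.2, p.2⟩) (fun p _ => ⟨addBox p.1 p.2, p.2⟩)
    ?_ ?_ ?_ ?_ ?_ <;>
    simp only [Finset.mem_sigma, mem_diagramsOfCard, Sigma.forall] <;> rintro Y c ⟨hY, hc⟩
  · exact ⟨Nat.succ_injective ((card_removeBox hc).trans hY), mem_addables_removeBox hc⟩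
  · exact ⟨(card_addBox hc).trans (congrArg _ hY), mem_removables_addBox hc⟩
  · rw [addBox_removeBox hc]
  · rw [removeBox_addBox hc]
  · rw [addBox_removeBox hc]

end GrowthGraph

section ZMeasure

/-- The numerator `∏ c ∈ Y, (z + c(□)) (z' + c(□))` of the (unnormalised) z-measure. -/
def contentProd {R : Type*} [CommRing R] (z z' : R) (Y : YoungDiagram) : R :=
  ∏ c ∈ Y.cells, (z + cellContent c) * (z' + cellContent c)

lemma contentProd_addBox {R : Type*} [CommRing R] (z z' : R) {Y : YoungDiagram} {c : ℕ × ℕ}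
    (hc : c ∈ addables Y) :
    contentProd z z' (addBox Y c)
      = (z + cellContent c) * (z' + cellContent c) * contentProd z z' Y := by
  rw [contentProd, cells_addBox hc, Finset.prod_insert (mem_addables_iff.mp hc).1, contentProd]

variable {K : Type*} [Field K]

lemma prod_cells_div_hookLen_sq (z z' : K) (Y : YoungDiagram) :
    ∏ c ∈ Y.cells, ((z + cellContent c) * (z' + cellContent c) / (hookLen Y c : K) ^ 2)
      = contentProd z z' Y / (hookProd Y : K) ^ 2 := by
  rw [Finset.prod_div_distrib, Finset.prod_pow, contentProd, hookProd, Nat.cast_prod]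

variable [CharZero K]

theorem succ_mul_sum_contentProd_div_hookProd_sq (n : ℕ) (z z' : K) :
    (n + 1) * ∑ L ∈ diagramsOfCard (n + 1), contentProd z z' L / (hookProd L : K) ^ 2
      = (z * z' + n) * ∑ Y ∈ diagramsOfCard n, contentProd z z' Y / (hookProd Y : K) ^ 2 := by
  have hook_ne (Y : YoungDiagram) : (hookProd Y : K) ≠ 0 :=
    Nat.cast_ne_zero.mpr (hookProd_ne_zero Y)
  calc
    _ = ∑ L ∈ diagramsOfCard (n + 1), ∑ c ∈ removables L,
          contentProd z z' L / (hookProd L * hookProd (removeBox L c)) := by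
      rw [Finset.mul_sum]
      refine Finset.sum_congr rfl fun L hL => ?_
      rw [← Nat.cast_add_one, ← mem_diagramsOfCard.mp hL, ← sum_removables_hookProd_div,
        Finset.sum_mul]
      refine Finset.sum_congr rfl fun c _ => ?_
      have := hook_ne L
      field_simp
    _ = ∑ Y ∈ diagramsOfCard n, ∑ c ∈ addables Y,
          contentProd z z' (addBox Y c) / (hookProd (addBox Y c) * hookProd Y) :=
      sum_sum_removables_eq_sum_sum_addables
        fun Y L _ => contentProd z z' L / (hookProd L * hookProd Y)
    _ = _ := by
      rw [Finset.mul_sum]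
      refine Finset.sum_congr rfl fun Y hY => ?_
      rw [← mem_diagramsOfCard.mp hY, ← sum_addables_mul_hookProd_div, Finset.sum_mul]
      refine Finset.sum_congr rfl fun c hc => ?_
      have := hook_ne Y
      rw [contentProd_addBox z z' hc]
      field_simp

theorem sum_zMeasure_numerator_general (n : ℕ) (z z' : K) :
    ∑ Y ∈ diagramsOfCard n, (n.factorial : K) * ∏ c ∈ Y.cells,
        ((z + cellContent c) * (z' + cellContent c) / (hookLen Y c : K) ^ 2)
      = (ascPochhammer K n).eval (z * z') := by
  simp only [prod_cells_div_hookLen_sq, ← Finset.mul_sum]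
  induction n with
  | zero => simp [diagramsOfCard_zero, contentProd, hookProd]
  | succ n ih =>
    rw [ascPochhammer_succ_eval, ← ih, Nat.factorial_succ, Nat.cast_mul, Nat.cast_add_one]
    linear_combination
      (n.factorial : K) * succ_mul_sum_contentProd_div_hookProd_sq n z z'

end ZMeasure

/-- For every `n ∈ ℕ` and all `z, z' ∈ ℂ`:
`Σ_{λ ⊢ n} n! · Π_{□∈λ} (z + c(□))(z' + c(□)) / h(□)² = (zz')_n`,
the sum being over all partitions (Young diagrams) of size `n`.
(There are finitely many such diagrams, so the `tsum` is a genuine finite sum.) -/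
theorem sum_zMeasure_numerator (n : ℕ) (z z' : ℂ) :
    ∑' Y : {Y : YoungDiagram // Y.card = n}, ((n.factorial : ℂ) * zWeight z z' Y.1) =
      (ascPochhammer ℂ n).eval (z * z') := by
  have : Fintype {Y : YoungDiagram // Y.card = n} := (finite_setOf_card_eq n).fintype
  rw [tsum_fintype, ← sum_zMeasure_numerator_general n z z']
  exact (Finset.sum_subtype (diagramsOfCard n) (fun _ => mem_diagramsOfCard)
    fun Y => (n.factorial : ℂ) * zWeight z z' Y).symm
end

section
/- Let α, β, z, z' ∈ ℂ with |αβ| < 1, and let i, j ∈ ℤ + 1/2. Then the matrix coefficient ⟨i|j⟩_{α,β,z,z'} satisfies: for i ≤ j, ⟨i|j⟩_{α,β,z,z'} = (α^{j−i}/(j−i)!) (z+i+1/2)_{j−i} · F(−z−i+1/2, −z'−i+1/2; j−i+1; αβ), and for i ≥ j, ⟨i|j⟩_{α,β,z,z'} = (β^{i−j}/(i−j)!) (z'+j+1/2)_{i−j} · F(−z−j+1/2, −z'−j+1/2; i−j+1; αβ), where F(a,b;c;w) = Σ_{k≥0} (a)_k (b)_k / ((c)_k k!) · w^k is the Gauss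 hypergeometric series. -/
open scoped Classical

noncomputable section

/-- Rising factorial (Pochhammer symbol) `(a)_s = a(a+1)⋯(a+s−1)`. -/
def riseFac (a : ℂ) (s : ℕ) : ℂ := ∏ t ∈ Finset.range s, (a + t)

/-- Falling factorial `(a)_{↓s} = a(a−1)⋯(a−s+1)`. -/
def fallFac (a : ℂ) (s : ℕ) : ℂ := ∏ t ∈ Finset.range s, (a - t)

/-- The Gauss hypergeometric series `F(a,b;c;w) = Σ_{k≥0} (a)_k (b)_k / ((c)_k k!) · wᵏ`. -/
def gaussHyp (a b c w : ℂ) : ℂ :=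
  ∑' k : ℕ, riseFac a k * riseFac b k / (riseFac c k * (k.factorial : ℂ)) * w ^ k

/-- The matrix coefficient `⟨i|j⟩_{α,β,z,z'}`, i.e. the coefficient of `v_j` in
`e^{αU} e^{βD} v_i` for the `sl(2)`-action `U v_k = (z+k+1/2)v_{k+1}`,
`D v_k = (z'+k−1/2)v_{k−1}` on the module with basis `{v_k}_{k ∈ ℤ+1/2}`.
Half-integers are encoded by integers: `i = a + 1/2`, `j = b + 1/2` with `a, b ∈ ℤ`.
By definition
`⟨i|j⟩ = Σ_{s ≥ max(0,i−j)} (βˢ/s!)(z'+i−1/2)_{↓s} · (α^{j−i+s}/(j−i+s)!)(z+i−s+1/2)_{j−i+s}`,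
the terms with `j − i + s < 0` being absent. -/
def mcoef (α β z z' : ℂ) (a b : ℤ) : ℂ :=
  ∑' s : ℕ, if b - a + (s : ℤ) < 0 then 0 else
    (β ^ s / (s.factorial : ℂ)) * fallFac (z' + ((a : ℂ) + 1/2) - 1/2) s *
      (α ^ (b - a + (s : ℤ)).toNat / ((b - a + (s : ℤ)).toNat.factorial : ℂ)) *
      riseFac (z + ((a : ℂ) + 1/2) - s + 1/2) (b - a + (s : ℤ)).toNat

/-- The dual matrix coefficient `⟨i|j⟩*_{α,β,z,z'}`, i.e. the coefficient of `v*_j` in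
`e^{αU} e^{βD} v*_i` for the dual `sl(2)`-action `U v*_k = −(z+k−1/2)v*_{k−1}`,
`D v*_k = −(z'+k+1/2)v*_{k+1}`.  Half-integers are encoded as `i = a + 1/2`, `j = b + 1/2`.
By definition
`⟨i|j⟩* = Σ_{s ≥ max(0,j−i)} ((−β)ˢ/s!)(z'+i+1/2)_s · ((−α)^{i+s−j}/(i+s−j)!)(z+i+s−1/2)_{↓(i+s−j)}`,
the terms with `i + s − j < 0` being absent. -/
def mcoefStar (α β z z' : ℂ) (a b : ℤ) : ℂ :=
  ∑' s : ℕ, if a - b + (s : ℤ) < 0 then 0 else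
    ((-β) ^ s / (s.factorial : ℂ)) * riseFac (z' + ((a : ℂ) + 1/2) + 1/2) s *
      ((-α) ^ (a - b + (s : ℤ)).toNat / ((a - b + (s : ℤ)).toNat.factorial : ℂ)) *
      fallFac (z + ((a : ℂ) + 1/2) + s - 1/2) (a - b + (s : ℤ)).toNat

/-! With `i = a + 1/2` and `j = b + 1/2`, rewriting the rising factorial in `⟨i|j⟩` as a falling one gives
`⟨i|j⟩ = ∑ C(z' + a, s) βˢ · C(z + b, t) αᵗ`, over `s, t ≥ 0` with `t - s = b - a`.
This sum is invariant under the exchange `(α, z, b) ↔ (β, z', a)`, so only `i ≤ j` has to be treated.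
There `t = s + n`, and splitting off the first `n` factors of `(z + b)_{↓(n + s)}` and `(n + s)!`
leaves the terms of the hypergeometric series. -/

lemma riseFac_eq_eval_ascPochhammer (x : ℂ) (n : ℕ) :
    riseFac x n = (ascPochhammer ℂ n).eval x := by
  induction n with
  | zero => simp [riseFac]
  | succ n ih => rw [ascPochhammer_succ_eval, ← ih, riseFac, riseFac, Finset.prod_range_succ]

lemma fallFac_eq_eval_descPochhammer (x : ℂ) (n : ℕ) :
    fallFac x n = (descPochhammer ℂ n).eval x :=
  (descPochhammer_eval_eq_prod_range n x).symm

lemma fallFac_eq_riseFac (x : ℂ) (n : ℕ) : fallFac x n = riseFac (x - n + 1) n := by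
  rw [fallFac_eq_eval_descPochhammer, riseFac_eq_eval_ascPochhammer,
    descPochhammer_eval_eq_ascPochhammer]

lemma fallFac_eq_neg_one_pow_mul_riseFac_neg (x : ℂ) (n : ℕ) :
    fallFac x n = (-1) ^ n * riseFac (-x) n := by
  rw [fallFac_eq_eval_descPochhammer, riseFac_eq_eval_ascPochhammer,
    ascPochhammer_eval_neg_eq_descPochhammer, ← mul_assoc, ← mul_pow, neg_one_mul, neg_neg,
    one_pow, one_mul]

lemma fallFac_add (x : ℂ) (m n : ℕ) : fallFac x (m + n) = fallFac x m * fallFac (x - m) n := by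
  simp only [fallFac, Finset.prod_range_add, Nat.cast_add, sub_add_eq_sub_sub]

lemma factorial_mul_riseFac (n s : ℕ) :
    (n.factorial : ℂ) * riseFac (n + 1) s = (n + s).factorial := by
  rw [riseFac_eq_eval_ascPochhammer, factorial_mul_ascPochhammer]

lemma gaussHyp_comm (a b c w : ℂ) : gaussHyp a b c w = gaussHyp b a c w := by
  simp only [gaussHyp, mul_comm (riseFac a _)]

/-- The term `C(x, s) γˢ` of the binomial series of `(1 + γ)ˣ`; the terms of `mcoef` are products
of two of these. -/
def binomTerm (γ x : ℂ) (s : ℕ) : ℂ := γ ^ s / (s.factorial : ℂ) * fallFac x s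

lemma binomTerm_eq_riseFac_neg (γ x : ℂ) (s : ℕ) :
    binomTerm γ x s = (-γ) ^ s * riseFac (-x) s / s.factorial := by
  rw [binomTerm, fallFac_eq_neg_one_pow_mul_riseFac_neg, neg_pow γ]
  ring

lemma binomTerm_add (γ x : ℂ) (n s : ℕ) :
    binomTerm γ (x + n) (n + s) =
      γ ^ n / n.factorial * riseFac (x + 1) n *
        ((-γ) ^ s * riseFac (-x) s / riseFac (n + 1) s) := by
  have split_fallFac : fallFac (x + n) (n + s) =
      riseFac (x + 1) n * ((-1) ^ s * riseFac (-x) s) := by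
    rw [fallFac_add, fallFac_eq_riseFac, add_sub_cancel_right,
      fallFac_eq_neg_one_pow_mul_riseFac_neg]
  rw [binomTerm, split_fallFac, ← factorial_mul_riseFac, pow_add, neg_pow γ s]
  ring

lemma mcoef_eq_tsum_binomTerm (α β z z' : ℂ) (a b : ℤ) :
    mcoef α β z z' a b = ∑' s : ℕ, if b - a + (s : ℤ) < 0 then 0 else
      binomTerm β (z' + a) s * binomTerm α (z + b) (b - a + (s : ℤ)).toNat := by
  refine tsum_congr fun s => ?_
  split_ifs with hneg
  · rfl
  · obtain ⟨t, ht⟩ := Int.eq_ofNat_of_zero_le (not_lt.mp hneg)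
    obtain rfl : b = a - s + t := by lia
    have rise_to_fall : riseFac (z + ((a : ℂ) + 1 / 2) - s + 1 / 2) t =
        fallFac (z + (a - s + t : ℤ)) t := by
      rw [fallFac_eq_riseFac]
      congr 1
      push_cast
      ring
    rw [ht, Int.toNat_natCast, rise_to_fall, binomTerm, binomTerm, ← add_assoc,
      add_sub_cancel_right]
    ring

lemma mcoef_add_natCast_right (α β z z' : ℂ) (a : ℤ) (n : ℕ) :
    mcoef α β z z' a (a + n) =
      ∑' s : ℕ, binomTerm β (z' + a) s * binomTerm α (z + a + n) (n + s) := by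
  rw [mcoef_eq_tsum_binomTerm]
  refine tsum_congr fun s => ?_
  have index_eq : a + n - a + (s : ℤ) = (n + s : ℕ) := by lia
  rw [index_eq, if_neg (by lia), Int.toNat_natCast, Int.cast_add, Int.cast_natCast, add_assoc z]

lemma mcoef_add_natCast_left (α β z z' : ℂ) (b : ℤ) (n : ℕ) :
    mcoef α β z z' (b + n) b =
      ∑' s : ℕ, binomTerm α (z + b) s * binomTerm β (z' + b + n) (n + s) := by
  rw [mcoef_eq_tsum_binomTerm, ← (add_right_injective n).tsum_eq]
  · refine tsum_congr fun s => ?_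
    have index_eq : b - (b + n) + ((n + s : ℕ) : ℤ) = s := by lia
    rw [index_eq, if_neg (by lia), Int.toNat_natCast, Int.cast_add, Int.cast_natCast, mul_comm,
      add_assoc z']
  · intro s hs
    have n_le_s : n ≤ s := by
      by_contra! s_lt_n
      exact hs (if_pos (by lia))
    exact ⟨s - n, Nat.add_sub_cancel' n_le_s⟩

lemma mcoef_swap (α β z z' : ℂ) (a b : ℤ) : mcoef α β z z' a b = mcoef β α z' z b a := by
  rcases le_total a b with hab | hba
  · obtain ⟨n, rfl⟩ := Int.le.dest hab
    rw [mcoef_add_natCast_right, mcoef_add_natCast_left]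
  · obtain ⟨n, rfl⟩ := Int.le.dest hba
    rw [mcoef_add_natCast_right, mcoef_add_natCast_left]

lemma mcoef_add_natCast_right_eq_gaussHyp (α β z z' : ℂ) (a : ℤ) (n : ℕ) :
    mcoef α β z z' a (a + n) =
      α ^ n / n.factorial * riseFac (z + a + 1) n *
        gaussHyp (-(z + a)) (-(z' + a)) (n + 1) (α * β) := by
  rw [mcoef_add_natCast_right, gaussHyp, ← tsum_mul_left]
  refine tsum_congr fun s => ?_
  have signs_cancel : (α * β) ^ s = (-α) ^ s * (-β) ^ s := by rw [← mul_pow, neg_mul_neg]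
  rw [binomTerm_eq_riseFac_neg, binomTerm_add, signs_cancel]
  ring

lemma mcoef_of_le (α β z z' : ℂ) {a b : ℤ} (hab : a ≤ b) :
    mcoef α β z z' a b =
      α ^ (b - a).toNat / ((b - a).toNat.factorial : ℂ) *
        riseFac (z + ((a : ℂ) + 1/2) + 1/2) (b - a).toNat *
        gaussHyp (-z - ((a : ℂ) + 1/2) + 1/2) (-z' - ((a : ℂ) + 1/2) + 1/2)
          ((((b : ℂ) + 1/2) - ((a : ℂ) + 1/2)) + 1) (α * β) := by
  obtain ⟨n, rfl⟩ := Int.le.dest hab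
  rw [mcoef_add_natCast_right_eq_gaussHyp, add_sub_cancel_left, Int.toNat_natCast]
  congr! 2
  · congr 1
    ring
  all_goals
    push_cast
    ring

/-- For `|αβ| ≥ 1` this has content when the series terminate; a divergent series has the value `0`
by the convention for `tsum`. -/
theorem mcoef_eq_gaussHyp_general (α β z z' : ℂ) (a b : ℤ) :
    (a ≤ b → mcoef α β z z' a b =
      α ^ (b - a).toNat / ((b - a).toNat.factorial : ℂ) *
        riseFac (z + ((a : ℂ) + 1/2) + 1/2) (b - a).toNat *
        gaussHyp (-z - ((a : ℂ) + 1/2) + 1/2) (-z' - ((a : ℂ) + 1/2) + 1/2)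
          ((((b : ℂ) + 1/2) - ((a : ℂ) + 1/2)) + 1) (α * β)) ∧
    (b ≤ a → mcoef α β z z' a b =
      β ^ (a - b).toNat / ((a - b).toNat.factorial : ℂ) *
        riseFac (z' + ((b : ℂ) + 1/2) + 1/2) (a - b).toNat *
        gaussHyp (-z - ((b : ℂ) + 1/2) + 1/2) (-z' - ((b : ℂ) + 1/2) + 1/2)
          ((((a : ℂ) + 1/2) - ((b : ℂ) + 1/2)) + 1) (α * β)) := by
  refine ⟨mcoef_of_le α β z z', fun hba => ?_⟩
  rw [mcoef_swap, mcoef_of_le β α z' z hba, gaussHyp_comm, mul_comm β α]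

/-- For `|αβ| < 1` and half-integers `i = a + 1/2`, `j = b + 1/2`:
if `i ≤ j` then `⟨i|j⟩ = (α^{j−i}/(j−i)!)(z+i+1/2)_{j−i} F(−z−i+1/2, −z'−i+1/2; j−i+1; αβ)`,
and if `i ≥ j` then
`⟨i|j⟩ = (β^{i−j}/(i−j)!)(z'+j+1/2)_{i−j} F(−z−j+1/2, −z'−j+1/2; i−j+1; αβ)`. -/
theorem mcoef_eq_gaussHyp (α β z z' : ℂ) (h : ‖α * β‖ < 1) (a b : ℤ) :
    (a ≤ b → mcoef α β z z' a b =
      α ^ (b - a).toNat / ((b - a).toNat.factorial : ℂ) *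
        riseFac (z + ((a : ℂ) + 1/2) + 1/2) (b - a).toNat *
        gaussHyp (-z - ((a : ℂ) + 1/2) + 1/2) (-z' - ((a : ℂ) + 1/2) + 1/2)
          ((((b : ℂ) + 1/2) - ((a : ℂ) + 1/2)) + 1) (α * β)) ∧
    (b ≤ a → mcoef α β z z' a b =
      β ^ (a - b).toNat / ((a - b).toNat.factorial : ℂ) *
        riseFac (z' + ((b : ℂ) + 1/2) + 1/2) (a - b).toNat *
        gaussHyp (-z - ((b : ℂ) + 1/2) + 1/2) (-z' - ((b : ℂ) + 1/2) + 1/2)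
          ((((a : ℂ) + 1/2) - ((b : ℂ) + 1/2)) + 1) (α * β)) := by
  exact mcoef_eq_gaussHyp_general α β z z' a b

end
end
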